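/- For every r with 3/8 ≤ r ≤ 3/2 and every α > 0 there exists a constant C = C(α, r) > 0 such that for all smooth mean-free divergence-free vector fields u on T³ and all smooth mean-free vector fields v on T³ one has |b(u, (I + α^{2r} A^r)^{−1} v, u)| ≤ C ‖u‖_{H^r}² ‖v‖_{H¹}. -/

import Mathlib

open MeasureTheory

noncomputable section

/-- A vector field on `ℝ³` is `ℤ³`-periodic (i.e. lives on the torus `T³`). -/
def IsPeriodicVF (u : (Fin 3 → ℝ) → (Fin 3 → ℝ)) : Prop :=
  ∀ (x : Fin 3 → ℝ) (m : Fin 3 → ℤ), u (x + fun i => (m i : ℝ)) = u x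

/-- A vector field has zero mean over the fundamental domain `[0,1]³`. -/
def IsMeanFree (u : (Fin 3 → ℝ) → (Fin 3 → ℝ)) : Prop :=
  ∫ x in Set.Icc (0 : Fin 3 → ℝ) 1, u x = 0

/-- A vector field is divergence-free: `∑ i, ∂ᵢ uᵢ = 0`. -/
def IsDivFree (u : (Fin 3 → ℝ) → (Fin 3 → ℝ)) : Prop :=
  ∀ x : Fin 3 → ℝ, ∑ i, fderiv ℝ u x (Pi.single i 1) i = 0

/-- The `k`-th Fourier coefficient `û(k) = ∫_{[0,1]³} u(x) e^{-2πi k·x} dx` (componentwise). -/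
def fourierCoeffVF (u : (Fin 3 → ℝ) → (Fin 3 → ℝ)) (k : Fin 3 → ℤ) : Fin 3 → ℂ :=
  fun j => ∫ x in Set.Icc (0 : Fin 3 → ℝ) 1,
    (u x j : ℂ) * Complex.exp (-(2 * Real.pi * Complex.I) * ∑ i, (k i : ℂ) * (x i : ℂ))

/-- The squared Euclidean length of a Fourier coefficient vector. -/
def fcNormSq (u : (Fin 3 → ℝ) → (Fin 3 → ℝ)) (k : Fin 3 → ℤ) : ℝ :=
  ∑ j, Complex.normSq (fourierCoeffVF u k j)

/-- The spectral weight `|2πk|^{2s}`. -/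
def specWeight (s : ℝ) (k : Fin 3 → ℤ) : ℝ :=
  ((2 * Real.pi) ^ 2 * ∑ i, ((k i : ℝ)) ^ 2) ^ s

/-- The Sobolev `H^s` norm: `‖u‖_{H^s}² = ∑_{k ≠ 0} |2πk|^{2s} |û(k)|²`. -/
def hsNorm (s : ℝ) (u : (Fin 3 → ℝ) → (Fin 3 → ℝ)) : ℝ :=
  Real.sqrt (∑' k : Fin 3 → ℤ, if k = 0 then 0 else specWeight s k * fcNormSq u k)

/-- The trilinear form `b(u,v,w) = ∑_{i,j} ∫_{[0,1]³} uᵢ (∂ᵢ vⱼ) wⱼ dx`. -/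
def bform (u v w : (Fin 3 → ℝ) → (Fin 3 → ℝ)) : ℝ :=
  ∑ i, ∑ j, ∫ x in Set.Icc (0 : Fin 3 → ℝ) 1,
    u x i * fderiv ℝ v x (Pi.single i 1) j * w x j

/-- Smooth, periodic, mean-free vector field on the torus. -/
def IsSmoothTorusVF (u : (Fin 3 → ℝ) → (Fin 3 → ℝ)) : Prop :=
  ContDiff ℝ (⊤ : ℕ∞) u ∧ IsPeriodicVF u ∧ IsMeanFree u

end

/-!
By Parseval, `b(u, w, z)` is a sum over triads of nonzero frequencies `k`, `l`, `k + l`. In each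
triad the lowest frequency is at most the other two, and these are then comparable. So if
`a, b, c ∈ [0, d/2)` and `a + b + c ≥ d/2`, the weight `|k|^{-a} |l|^{-b} |k + l|^{-c}` is dominated
by kernels `|s|^{-σ} |t|^{σ - d/2}` with `|s| ≤ |t|`, whose `ℓ²` norm in `s` is bounded uniformly
in `t` because `σ < d/2`; Cauchy–Schwarz then bounds the sum by `‖u‖_{H^a} ‖∇w‖_{H^b} ‖z‖_{H^c}`.

For `w = (I + α^{2r} A^r)⁻¹ v` the resolvent gains `2r ≥ 3/4` derivatives, so the choice
`(a, b, c) = (3/8, 3/4, 3/8)` in dimension `d = 3` costs only `‖v‖_{H¹}`.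
-/

section L2

open scoped ENNReal

variable {ι κ μ ν π : Type*}

/-- The `ℓ²` norm of a family in `[0, ∞]`; taking extended values makes summability side
conditions disappear from the lattice estimates. -/
noncomputable def l2ENorm (f : ι → ℝ≥0∞) : ℝ≥0∞ := (∑' i, f i ^ 2) ^ (1 / 2 : ℝ)

theorem l2ENorm_sq (f : ι → ℝ≥0∞) : l2ENorm f ^ 2 = ∑' i, f i ^ 2 := by
  rw [l2ENorm, ← ENNReal.rpow_mul_natCast]
  norm_num

theorem l2ENorm_le_iff {f : ι → ℝ≥0∞} {C : ℝ≥0∞} :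
    l2ENorm f ≤ C ↔ ∑' i, f i ^ 2 ≤ C ^ 2 := by
  rw [← l2ENorm_sq]
  exact (ENNReal.pow_le_pow_left_iff two_ne_zero).symm

theorem l2ENorm_comp_equiv (e : ι ≃ κ) (f : κ → ℝ≥0∞) :
    l2ENorm (fun i => f (e i)) = l2ENorm f :=
  congrArg (· ^ (1 / 2 : ℝ)) (e.tsum_eq fun k => f k ^ 2)

theorem tsum_mul_le_l2ENorm_mul_l2ENorm (f g : ι → ℝ≥0∞) :
    ∑' i, f i * g i ≤ l2ENorm f * l2ENorm g := by
  rw [ENNReal.tsum_eq_iSup_sum]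
  refine iSup_le fun s => ?_
  refine (ENNReal.inner_le_Lp_mul_Lq s f g Real.HolderConjugate.two_two).trans ?_
  simp only [l2ENorm, ENNReal.rpow_ofNat]
  gcongr <;> exact ENNReal.sum_le_tsum s

theorem l2ENorm_mul_prod (f : ι → ℝ≥0∞) (g : κ → ℝ≥0∞) :
    l2ENorm (fun p : ι × κ => f p.1 * g p.2) = l2ENorm f * l2ENorm g := by
  simp only [l2ENorm, mul_pow, ENNReal.tsum_prod', ENNReal.tsum_mul_left, ENNReal.tsum_mul_right]
  rw [ENNReal.mul_rpow_of_nonneg _ _ (by norm_num)]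

theorem l2ENorm_kernel_mul_le {B : ι → κ → ℝ≥0∞} {M : ℝ≥0∞}
    (hB : ∀ t, l2ENorm (fun s => B s t) ≤ M) (h : κ → ℝ≥0∞) :
    l2ENorm (fun p : ι × κ => B p.1 p.2 * h p.2) ≤ M * l2ENorm h := by
  rw [l2ENorm_le_iff, ENNReal.tsum_prod', ENNReal.tsum_comm, mul_pow, l2ENorm_sq,
    ← ENNReal.tsum_mul_left]
  refine ENNReal.tsum_le_tsum fun t => ?_
  simp only [mul_pow, ENNReal.tsum_mul_right]
  gcongr
  exact l2ENorm_le_iff.1 (hB t)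

theorem tsum_kernel_mul_le {B : ι → κ → ℝ≥0∞} {M : ℝ≥0∞}
    (hB : ∀ t, l2ENorm (fun s => B s t) ≤ M) (e : π ≃ ι × κ) (e' : π ≃ μ × ν)
    (f : μ → ℝ≥0∞) (g : ν → ℝ≥0∞) (h : κ → ℝ≥0∞) :
    ∑' p, B (e p).1 (e p).2 * (f (e' p).1 * g (e' p).2 * h (e p).2) ≤
      M * (l2ENorm f * l2ENorm g * l2ENorm h) := by
  calc ∑' p, B (e p).1 (e p).2 * (f (e' p).1 * g (e' p).2 * h (e p).2)
      = ∑' p, (f (e' p).1 * g (e' p).2) * (B (e p).1 (e p).2 * h (e p).2) :=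
        tsum_congr fun p => by ring
    _ ≤ l2ENorm (fun p => f (e' p).1 * g (e' p).2) *
          l2ENorm (fun p => B (e p).1 (e p).2 * h (e p).2) := tsum_mul_le_l2ENorm_mul_l2ENorm _ _
    _ ≤ (l2ENorm f * l2ENorm g) * (M * l2ENorm h) := by
        rw [l2ENorm_comp_equiv e' fun q => f q.1 * g q.2, l2ENorm_mul_prod,
          l2ENorm_comp_equiv e fun q => B q.1 q.2 * h q.2]
        gcongr
        exact l2ENorm_kernel_mul_le hB h
    _ = M * (l2ENorm f * l2ENorm g * l2ENorm h) := by ring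

theorem tsum_kernel_add_mul_le {G : Type*} [AddCommGroup G] {B : G → G → ℝ≥0∞} {M : ℝ≥0∞}
    (hB : ∀ t, l2ENorm (fun s => B s t) ≤ M) (f g h : G → ℝ≥0∞) :
    ∑' p : G × G, (B p.1 (p.1 + p.2) + B p.2 (p.1 + p.2) + B (p.1 + p.2) p.1) *
      (f p.1 * g p.2 * h (p.1 + p.2)) ≤ 3 * M * (l2ENorm f * l2ENorm g * l2ENorm h) := by
  let shear : G × G ≃ G × G := (Equiv.refl G).prodShear Equiv.addLeft
  have left_low : ∑' p : G × G, B p.1 (p.1 + p.2) * (f p.1 * g p.2 * h (p.1 + p.2)) ≤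
      M * (l2ENorm f * l2ENorm g * l2ENorm h) :=
    tsum_kernel_mul_le hB shear (Equiv.refl _) f g h
  have right_low : ∑' p : G × G, B p.2 (p.1 + p.2) * (f p.1 * g p.2 * h (p.1 + p.2)) ≤
      M * (l2ENorm f * l2ENorm g * l2ENorm h) := by
    simpa [shear, add_comm] using
      tsum_kernel_mul_le hB ((Equiv.prodComm G G).trans shear) (Equiv.refl _) f g h
  have sum_low : ∑' p : G × G, B (p.1 + p.2) p.1 * (f p.1 * g p.2 * h (p.1 + p.2)) ≤
      M * (l2ENorm f * l2ENorm g * l2ENorm h) := by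
    convert tsum_kernel_mul_le hB (shear.trans (Equiv.prodComm G G))
      ((Equiv.prodComm G G).trans shear) g h f using 1
    · refine tsum_congr fun p => ?_
      simp only [shear, Equiv.trans_apply, Equiv.prodComm_apply, Equiv.prodShear_apply,
        Equiv.refl_apply, Equiv.coe_addLeft, Prod.fst_swap, Prod.snd_swap, add_comm p.2]
      ring
    · ring
  simp only [add_mul, ENNReal.tsum_add]
  refine (add_le_add (add_le_add left_low right_low) sum_low).trans_eq ?_
  ring

end L2

section Lattice

open scoped ENNReal NNReal

theorem mul_rpow_sub_one_le_rpow_sub_rpow {q x : ℝ} (hq0 : 0 ≤ q) (hq1 : q ≤ 1) (hx : 0 ≤ x) :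
    q * (x + 1) ^ (q - 1) ≤ (x + 1) ^ q - x ^ q := by
  have hx1 : 0 < x + 1 := by linarith
  have bernoulli : (x / (x + 1)) ^ q ≤ 1 - q / (x + 1) := by
    convert rpow_one_add_le_one_add_mul_self (s := -(x + 1)⁻¹) (p := q) ?_ hq0 hq1 using 1
    · congr 1
      field_simp
      ring
    · ring
    · exact neg_le_neg (inv_le_one_of_one_le₀ (by linarith))
  rw [Real.div_rpow hx hx1.le, div_le_iff₀ (by positivity)] at bernoulli
  rw [Real.rpow_sub_one hx1.ne']
  calc q * ((x + 1) ^ q / (x + 1)) = (x + 1) ^ q - (1 - q / (x + 1)) * (x + 1) ^ q := by ring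
    _ ≤ (x + 1) ^ q - x ^ q := by linarith

theorem sum_Icc_rpow_neg_le {p : ℝ} (hp0 : 0 ≤ p) (hp1 : p < 1) {N : ℕ} (hN : 1 ≤ N) :
    ∑ j ∈ Finset.Icc (-(N : ℤ)) N, (max 1 ‖j‖) ^ (-p) ≤ 3 / (1 - p) * (N : ℝ) ^ (1 - p) := by
  have hq : 0 < 1 - p := by linarith
  induction N, hN using Nat.le_induction with
  | base =>
    have : Finset.Icc (-((1 : ℕ) : ℤ)) (1 : ℕ) = {-1, 0, 1} := by decide
    have sum_eq : ∑ j ∈ ({-1, 0, 1} : Finset ℤ), (max 1 ‖j‖) ^ (-p) = 3 := by norm_num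
    rw [this, sum_eq, Nat.cast_one, Real.one_rpow, mul_one, le_div_iff₀ hq]
    linarith
  | succ N hN ih =>
    have endpoints : Finset.Icc (-((N + 1 : ℕ) : ℤ)) (N + 1 : ℕ)
        = insert (-((N + 1 : ℕ) : ℤ)) (insert ((N + 1 : ℕ) : ℤ) (Finset.Icc (-(N : ℤ)) N)) := by
      ext j
      simp only [Finset.mem_Icc, Finset.mem_insert]
      omega
    have norm_endpoint : max 1 ‖((N + 1 : ℕ) : ℤ)‖ = (N : ℝ) + 1 := by
      simp [Int.norm_eq_abs, abs_of_nonneg (by positivity : (0 : ℝ) ≤ N + 1)]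
    rw [endpoints, Finset.sum_insert (by simp; omega), Finset.sum_insert (by simp), norm_neg,
      norm_endpoint, Nat.cast_succ]
    have increment := mul_rpow_sub_one_le_rpow_sub_rpow hq.le (by linarith) N.cast_nonneg
    have term_nonneg : (0 : ℝ) ≤ ((N : ℝ) + 1) ^ (-p) := by positivity
    rw [sub_sub_cancel_left] at increment
    have scaled : 3 * ((N : ℝ) + 1) ^ (-p) ≤
        3 / (1 - p) * (((N : ℝ) + 1) ^ (1 - p) - (N : ℝ) ^ (1 - p)) := by
      rw [div_mul_eq_mul_div, le_div_iff₀ hq]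
      linarith
    linarith

variable {ι : Type*} [Fintype ι]

theorem one_le_norm_of_ne_zero {k : ι → ℤ} (hk : k ≠ 0) : 1 ≤ ‖k‖ := by
  obtain ⟨i, hi⟩ := Function.ne_iff.1 hk
  calc (1 : ℝ) ≤ ‖k i‖ := by
        rw [Int.norm_eq_abs]
        exact_mod_cast Int.one_le_abs hi
    _ ≤ ‖k‖ := norm_le_pi_norm k i

theorem norm_rpow_neg_card_mul_le {p : ℝ} (hp : 0 ≤ p) {k : ι → ℤ} (hk : k ≠ 0) :
    ‖k‖ ^ (-(p * Fintype.card ι)) ≤ ∏ i, (max 1 ‖k i‖) ^ (-p) := by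
  calc ‖k‖ ^ (-(p * Fintype.card ι)) = ∏ _i : ι, ‖k‖ ^ (-p) := by
        rw [Finset.prod_const, Finset.card_univ, ← Real.rpow_mul_natCast (norm_nonneg k), neg_mul]
    _ ≤ ∏ i, (max 1 ‖k i‖) ^ (-p) := by
        refine Finset.prod_le_prod (fun _ _ => by positivity) fun i _ => ?_
        exact Real.rpow_le_rpow_of_nonpos (by positivity)
          (max_le (one_le_norm_of_ne_zero hk) (norm_le_pi_norm k i)) (by linarith)

theorem exists_sum_box_norm_rpow_neg_le [DecidableEq ι] {σ : ℝ} (hσ0 : 0 ≤ σ)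
    (hσ : σ < Fintype.card ι) :
    ∃ C : ℝ≥0, ∀ N : ℕ, 1 ≤ N →
      ∑ k ∈ (Fintype.piFinset fun _ : ι => Finset.Icc (-(N : ℤ)) N) with k ≠ 0, ‖k‖ ^ (-σ) ≤
        C * (N : ℝ) ^ (Fintype.card ι - σ) := by
  have hd : (0 : ℝ) < Fintype.card ι := hσ0.trans_lt hσ
  set p : ℝ := σ / Fintype.card ι with hp
  have hpσ : p * Fintype.card ι = σ := div_mul_cancel₀ _ hd.ne'
  have hp0 : 0 ≤ p := by positivity
  have hp1 : p < 1 := (div_lt_one hd).2 hσ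
  have hC : 0 ≤ 3 / (1 - p) := div_nonneg zero_le_three (by linarith)
  refine ⟨⟨(3 / (1 - p)) ^ Fintype.card ι, by positivity⟩, fun N hN => ?_⟩
  calc ∑ k ∈ (Fintype.piFinset fun _ : ι => Finset.Icc (-(N : ℤ)) N) with k ≠ 0, ‖k‖ ^ (-σ)
      ≤ ∑ k ∈ (Fintype.piFinset fun _ : ι => Finset.Icc (-(N : ℤ)) N) with k ≠ 0,
          ∏ i, (max 1 ‖k i‖) ^ (-p) := by
        refine Finset.sum_le_sum fun k hk => ?_
        rw [← hpσ]
        exact norm_rpow_neg_card_mul_le hp0 (Finset.mem_filter.1 hk).2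
    _ ≤ ∑ k ∈ Fintype.piFinset fun _ : ι => Finset.Icc (-(N : ℤ)) N,
          ∏ i, (max 1 ‖k i‖) ^ (-p) :=
        Finset.sum_le_sum_of_subset_of_nonneg (Finset.filter_subset _ _)
          fun k _ _ => Finset.prod_nonneg fun i _ => by positivity
    _ = (∑ j ∈ Finset.Icc (-(N : ℤ)) N, (max 1 ‖j‖) ^ (-p)) ^ Fintype.card ι := by
        rw [← Finset.card_univ, ← Finset.prod_const, Finset.prod_univ_sum]
    _ ≤ (3 / (1 - p) * (N : ℝ) ^ (1 - p)) ^ Fintype.card ι := by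
        gcongr
        exact sum_Icc_rpow_neg_le hp0 hp1 hN
    _ = (3 / (1 - p)) ^ Fintype.card ι * (N : ℝ) ^ (Fintype.card ι - σ) := by
        rw [mul_pow, ← Real.rpow_mul_natCast N.cast_nonneg, sub_mul, one_mul, hpσ]

/-- The kernel `|s|^{-σ} |t|^{σ - d/2}` on the lattice `ℤᵈ`, cut off to nonzero `s` with
`|s| ≤ |t|` (sup norms). The interaction of three frequencies `k`, `l`, `k + l` is dominated by
such kernels, with `s` the lowest frequency and `t` one of the other two. -/
noncomputable def lowHighKernel (σ : ℝ) (s t : ι → ℤ) : ℝ≥0∞ :=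
  open scoped Classical in
  if s ≠ 0 ∧ ‖s‖ ≤ ‖t‖ then ENNReal.ofReal (‖s‖ ^ (-σ) * ‖t‖ ^ (σ - Fintype.card ι / 2)) else 0

theorem lowHighKernel_of_le {σ : ℝ} {s t : ι → ℤ} (hs : s ≠ 0) (hst : ‖s‖ ≤ ‖t‖) :
    lowHighKernel σ s t = ENNReal.ofReal (‖s‖ ^ (-σ) * ‖t‖ ^ (σ - Fintype.card ι / 2)) :=
  if_pos ⟨hs, hst⟩

theorem lowHighKernel_sq {σ : ℝ} {s t : ι → ℤ} (hs : s ≠ 0) (hst : ‖s‖ ≤ ‖t‖) :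
    lowHighKernel σ s t ^ 2 =
      ENNReal.ofReal (‖s‖ ^ (-(2 * σ)) * ‖t‖ ^ (-(Fintype.card ι - 2 * σ))) := by
  rw [lowHighKernel_of_le hs hst, ← ENNReal.ofReal_pow (by positivity), mul_pow,
    ← Real.rpow_mul_natCast (norm_nonneg s), ← Real.rpow_mul_natCast (norm_nonneg t)]
  congr 3 <;> push_cast <;> ring

theorem mem_piFinset_Icc_of_norm_le [DecidableEq ι] {s : ι → ℤ} {R : ℝ} (hs : ‖s‖ ≤ R) :
    s ∈ Fintype.piFinset fun _ : ι => Finset.Icc (-(⌊R⌋₊ : ℤ)) ⌊R⌋₊ := by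
  refine Fintype.mem_piFinset.2 fun i => Finset.mem_Icc.2 ?_
  have : ((s i).natAbs : ℝ) ≤ R := by
    rw [Nat.cast_natAbs, Int.cast_abs, ← Int.norm_eq_abs]
    exact (norm_le_pi_norm s i).trans hs
  have natAbs_le := Nat.le_floor this
  omega

theorem exists_l2ENorm_lowHighKernel_le {σ : ℝ} (hσ0 : 0 ≤ σ) (hσ : σ < Fintype.card ι / 2) :
    ∃ M : ℝ≥0, ∀ t : ι → ℤ, l2ENorm (fun s => lowHighKernel σ s t) ≤ M := by
  classical
  obtain ⟨C, hC⟩ := exists_sum_box_norm_rpow_neg_le (ι := ι) (σ := 2 * σ) (by positivity)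
    (by linarith)
  refine ⟨NNReal.sqrt C, fun t => l2ENorm_le_iff.2 ?_⟩
  have hM : ((NNReal.sqrt C : ℝ≥0) : ℝ≥0∞) ^ 2 = ENNReal.ofReal C := by
    rw [← ENNReal.coe_pow, NNReal.sq_sqrt, ENNReal.ofReal_coe_nnreal]
  rw [hM]
  let box := {s ∈ Fintype.piFinset fun _ : ι => Finset.Icc (-(⌊‖t‖⌋₊ : ℤ)) ⌊‖t‖⌋₊ | s ≠ 0}
  have outside : ∀ s ∉ box, lowHighKernel σ s t ^ 2 = 0 := fun s hs => by
    rw [lowHighKernel, if_neg, zero_pow two_ne_zero]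
    exact fun h => hs (Finset.mem_filter.2 ⟨mem_piFinset_Icc_of_norm_le h.2, h.1⟩)
  rw [tsum_eq_sum outside]
  rcases eq_or_ne t 0 with rfl | ht
  · refine (Finset.sum_eq_zero fun s _ => ?_).trans_le zero_le
    simp [lowHighKernel]
  have hR : 0 < ‖t‖ := norm_pos_iff.2 ht
  have hN : 1 ≤ ⌊‖t‖⌋₊ := Nat.one_le_floor_iff _ |>.2 (one_le_norm_of_ne_zero ht)
  have kernel_le : ∀ s ∈ box, lowHighKernel σ s t ^ 2 ≤
      ENNReal.ofReal (‖s‖ ^ (-(2 * σ)) * ‖t‖ ^ (-(Fintype.card ι - 2 * σ))) := fun s hs => by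
    by_cases hst : ‖s‖ ≤ ‖t‖
    · exact (lowHighKernel_sq (Finset.mem_filter.1 hs).2 hst).le
    · simp [lowHighKernel, hst]
  refine (Finset.sum_le_sum kernel_le).trans ?_
  rw [← ENNReal.ofReal_sum_of_nonneg fun s _ => by positivity, ← Finset.sum_mul]
  refine ENNReal.ofReal_le_ofReal ?_
  rw [Real.rpow_neg hR.le, ← div_eq_mul_inv, div_le_iff₀ (by positivity)]
  refine (hC _ hN).trans ?_
  gcongr
  · linarith
  · exact Nat.floor_le hR.le

theorem rpow_neg_mul_le_lowHigh {a b c σ D s t t' : ℝ} (ha : a ≤ σ) (hc0 : 0 ≤ c) (hc : c ≤ σ)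
    (habc : D ≤ a + b + c) (hs : 1 ≤ s) (hst : s ≤ t) (htt' : t ≤ 2 * t') :
    s ^ (-a) * t ^ (-b) * t' ^ (-c) ≤ 2 ^ σ * (s ^ (-σ) * t ^ (σ - D)) := by
  have hs0 : 0 < s := by linarith
  have ht0 : 0 < t := by linarith
  have ht'0 : 0 < t' := by linarith
  have high : t' ^ (-c) ≤ 2 ^ σ * t ^ (-c) := by
    calc t' ^ (-c) = 2 ^ c * (2 * t') ^ (-c) := by
          rw [Real.mul_rpow zero_le_two ht'0.le, ← mul_assoc, ← Real.rpow_add two_pos,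
            add_neg_cancel, Real.rpow_zero, one_mul]
      _ ≤ 2 ^ σ * t ^ (-c) := by
          refine mul_le_mul (Real.rpow_le_rpow_of_exponent_le one_le_two hc)
            (Real.rpow_le_rpow_of_nonpos ht0 htt' (by linarith)) (by positivity) (by positivity)
  have low : s ^ (-a) ≤ s ^ (-σ) * t ^ (σ - a) := by
    calc s ^ (-a) = s ^ (-σ) * s ^ (σ - a) := by
          rw [← Real.rpow_add hs0]
          congr 1
          ring
      _ ≤ s ^ (-σ) * t ^ (σ - a) := by
          gcongr
  calc s ^ (-a) * t ^ (-b) * t' ^ (-c)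
      ≤ s ^ (-σ) * t ^ (σ - a) * t ^ (-b) * (2 ^ σ * t ^ (-c)) := by gcongr
    _ = 2 ^ σ * (s ^ (-σ) * t ^ (σ - (a + b + c))) := by
        rw [show σ - (a + b + c) = (σ - a) + -b + -c by ring, Real.rpow_add ht0,
          Real.rpow_add ht0]
        ring
    _ ≤ 2 ^ σ * (s ^ (-σ) * t ^ (σ - D)) := by
        gcongr
        linarith

theorem ofReal_norm_rpow_le_lowHighKernel {a b c σ : ℝ} (ha : a ≤ σ) (hc0 : 0 ≤ c) (hc : c ≤ σ)
    (habc : Fintype.card ι / 2 ≤ a + b + c) {s t t' : ι → ℤ} (hs : s ≠ 0) (hst : ‖s‖ ≤ ‖t‖)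
    (htt' : ‖t‖ ≤ 2 * ‖t'‖) :
    ENNReal.ofReal (‖s‖ ^ (-a) * ‖t‖ ^ (-b) * ‖t'‖ ^ (-c)) ≤
      ENNReal.ofReal (2 ^ σ) * lowHighKernel σ s t := by
  rw [lowHighKernel_of_le hs hst, ← ENNReal.ofReal_mul (by positivity)]
  exact ENNReal.ofReal_le_ofReal
    (rpow_neg_mul_le_lowHigh ha hc0 hc habc (one_le_norm_of_ne_zero hs) hst htt')

theorem ofReal_norm_rpow_le_sum_lowHighKernel {a b c σ : ℝ} (ha0 : 0 ≤ a) (ha : a ≤ σ)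
    (hb0 : 0 ≤ b) (hb : b ≤ σ) (hc : c ≤ σ) (habc : Fintype.card ι / 2 ≤ a + b + c)
    {k l : ι → ℤ} (hk : k ≠ 0) (hl : l ≠ 0) (hkl : k + l ≠ 0) :
    ENNReal.ofReal (‖k‖ ^ (-a) * ‖l‖ ^ (-b) * ‖k + l‖ ^ (-c)) ≤ ENNReal.ofReal (2 ^ σ) *
      (lowHighKernel σ k (k + l) + lowHighKernel σ l (k + l) + lowHighKernel σ (k + l) k) := by
  have sum_le : ‖k + l‖ ≤ ‖k‖ + ‖l‖ := norm_add_le k l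
  have left_le : ‖k‖ ≤ ‖k + l‖ + ‖l‖ := by simpa using norm_sub_le (k + l) l
  rw [mul_add, mul_add]
  by_cases left_low : ‖k‖ ≤ ‖l‖ ∧ ‖k‖ ≤ ‖k + l‖
  · refine le_add_right (le_add_right ?_)
    rw [mul_right_comm]
    exact ofReal_norm_rpow_le_lowHighKernel ha hb0 hb (by linarith) hk left_low.2 (by linarith)
  by_cases right_low : ‖l‖ ≤ ‖k‖ ∧ ‖l‖ ≤ ‖k + l‖
  · refine le_add_right (le_add_left ?_)
    rw [mul_comm, ← mul_assoc, mul_right_comm, mul_comm (‖k + l‖ ^ _)]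
    exact ofReal_norm_rpow_le_lowHighKernel hb ha0 ha (by linarith) hl right_low.2 (by linarith)
  · have sum_low : ‖k + l‖ ≤ ‖k‖ ∧ ‖k + l‖ ≤ ‖l‖ := by grind
    refine le_add_left ?_
    rw [mul_comm, ← mul_assoc]
    exact ofReal_norm_rpow_le_lowHighKernel hc hb0 hb (by linarith) hkl sum_low.1 (by linarith)

theorem ofReal_norm_rpow_neg_mul_cancel {k : ι → ℤ} (hk : k ≠ 0) (s : ℝ) (x : ℝ≥0∞) :
    ENNReal.ofReal (‖k‖ ^ (-s)) * (ENNReal.ofReal (‖k‖ ^ s) * x) = x := by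
  have hk' : 0 < ‖k‖ := norm_pos_iff.2 hk
  rw [← mul_assoc, ← ENNReal.ofReal_mul (by positivity), ← Real.rpow_add hk', neg_add_cancel,
    Real.rpow_zero, ENNReal.ofReal_one, one_mul]

theorem mul_mul_add_le_lowHighKernel {a b c σ : ℝ} (ha0 : 0 ≤ a) (ha : a ≤ σ)
    (hb0 : 0 ≤ b) (hb : b ≤ σ) (hc : c ≤ σ) (habc : Fintype.card ι / 2 ≤ a + b + c)
    {f g h : (ι → ℤ) → ℝ≥0∞} (hf : f 0 = 0) (hg : g 0 = 0) (hh : h 0 = 0) (k l : ι → ℤ) :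
    f k * g l * h (k + l) ≤ ENNReal.ofReal (2 ^ σ) *
      ((lowHighKernel σ k (k + l) + lowHighKernel σ l (k + l) + lowHighKernel σ (k + l) k) *
        (ENNReal.ofReal (‖k‖ ^ a) * f k * (ENNReal.ofReal (‖l‖ ^ b) * g l) *
          (ENNReal.ofReal (‖k + l‖ ^ c) * h (k + l)))) := by
  by_cases h0 : k = 0 ∨ l = 0 ∨ k + l = 0
  · rcases h0 with h0 | h0 | h0 <;> simp [h0, hf, hg, hh]
  simp only [not_or] at h0
  obtain ⟨hk, hl, hkl⟩ := h0
  rw [← mul_assoc]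
  refine le_trans (le_of_eq ?_) (mul_le_mul_left
    (ofReal_norm_rpow_le_sum_lowHighKernel ha0 ha hb0 hb hc habc hk hl hkl) _)
  conv_lhs => rw [← ofReal_norm_rpow_neg_mul_cancel hk a (f k),
    ← ofReal_norm_rpow_neg_mul_cancel hl b (g l),
    ← ofReal_norm_rpow_neg_mul_cancel hkl c (h (k + l))]
  rw [ENNReal.ofReal_mul (by positivity), ENNReal.ofReal_mul (by positivity)]
  ring

theorem exists_tsum_mul_mul_add_le_l2ENorm {a b c : ℝ} (ha0 : 0 ≤ a) (hb0 : 0 ≤ b)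
    (ha : a < Fintype.card ι / 2) (hb : b < Fintype.card ι / 2) (hc : c < Fintype.card ι / 2)
    (habc : Fintype.card ι / 2 ≤ a + b + c) :
    ∃ C : ℝ≥0, ∀ f g h : (ι → ℤ) → ℝ≥0∞, f 0 = 0 → g 0 = 0 → h 0 = 0 →
      ∑' p : (ι → ℤ) × (ι → ℤ), f p.1 * g p.2 * h (p.1 + p.2) ≤
        C * (l2ENorm (fun k => ENNReal.ofReal (‖k‖ ^ a) * f k) *
          l2ENorm (fun k => ENNReal.ofReal (‖k‖ ^ b) * g k) *
          l2ENorm (fun k => ENNReal.ofReal (‖k‖ ^ c) * h k)) := by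
  obtain ⟨σ, hσ, haσ, hbσ, hcσ⟩ :
      ∃ σ : ℝ, σ < Fintype.card ι / 2 ∧ a ≤ σ ∧ b ≤ σ ∧ c ≤ σ :=
    ⟨max a (max b c), max_lt ha (max_lt hb hc), le_max_left .., le_max_of_le_right (le_max_left ..),
      le_max_of_le_right (le_max_right ..)⟩
  obtain ⟨M, hM⟩ := exists_l2ENorm_lowHighKernel_le (ha0.trans haσ) hσ
  refine ⟨Real.toNNReal (2 ^ σ) * (3 * M), fun f g h hf hg hh => ?_⟩
  have pointwise := mul_mul_add_le_lowHighKernel ha0 haσ hb0 hbσ hcσ habc hf hg hh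
  refine (ENNReal.tsum_le_tsum fun p : (ι → ℤ) × (ι → ℤ) => pointwise p.1 p.2).trans ?_
  rw [ENNReal.tsum_mul_left, ENNReal.coe_mul, ENNReal.coe_mul, mul_assoc]
  exact mul_le_mul_right (tsum_kernel_add_mul_le hM _ _ _) _

end Lattice

section Fourier

open Set
open scoped ComplexConjugate ENNReal

-- Mathlib keeps the normalised measure on the circle local to the files that use it; the Fourier
-- theory of `UnitAddTorus` is stated with respect to it.
noncomputable local instance : MeasureSpace UnitAddCircle := ⟨AddCircle.haarAddCircle⟩

local instance : Measure.IsAddHaarMeasure (volume : Measure UnitAddCircle) :=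
  inferInstanceAs (Measure.IsAddHaarMeasure AddCircle.haarAddCircle)

local instance : IsProbabilityMeasure (volume : Measure UnitAddCircle) :=
  inferInstanceAs (IsProbabilityMeasure AddCircle.haarAddCircle)

variable {d : ℕ}

/-- Functions on the torus `ℝᵈ/ℤᵈ`, encoded as `ℤᵈ`-periodic functions on `ℝᵈ`. For vector fields
on `ℝ³` this unfolds to `IsPeriodicVF`. -/
def IsLatticePeriodic {E : Type*} (f : (Fin d → ℝ) → E) : Prop :=
  ∀ (x : Fin d → ℝ) (m : Fin d → ℤ), f (x + fun i => (m i : ℝ)) = f x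

/-- The character `x ↦ exp (-2πi k·x)` of the torus, with the sign of the Fourier transform. -/
noncomputable def torusCharacter (k : Fin d → ℤ) (x : Fin d → ℝ) : ℂ :=
  Complex.exp (-(2 * Real.pi * Complex.I) * ∑ i, (k i : ℂ) * (x i : ℂ))

/-- The Fourier coefficient `∫_{[0,1]ᵈ} f(x) exp (-2πi k·x) dx` of a scalar function. -/
noncomputable def torusFourierCoeff (f : (Fin d → ℝ) → ℂ) (k : Fin d → ℤ) : ℂ :=
  ∫ x in Icc (0 : Fin d → ℝ) 1, f x * torusCharacter k x

/-- The symbol `|2πk|²` of the negative Laplacian on the torus. -/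
noncomputable def laplaceSymbol (k : Fin d → ℤ) : ℝ :=
  (2 * Real.pi) ^ 2 * ∑ i, (k i : ℝ) ^ 2

namespace IsLatticePeriodic

variable {E : Type*}

theorem comp {f : (Fin d → ℝ) → E} (hf : IsLatticePeriodic f) {E' : Type*} (φ : E → E') :
    IsLatticePeriodic fun x => φ (f x) :=
  fun x m => congrArg φ (hf x m)

theorem mul [Mul E] {f g : (Fin d → ℝ) → E} (hf : IsLatticePeriodic f)
    (hg : IsLatticePeriodic g) : IsLatticePeriodic fun x => f x * g x :=
  fun x m => congrArg₂ (· * ·) (hf x m) (hg x m)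

theorem fderiv_apply [NormedAddCommGroup E] [NormedSpace ℝ E] {f : (Fin d → ℝ) → E}
    (hf : IsLatticePeriodic f) (v : Fin d → ℝ) : IsLatticePeriodic fun x => fderiv ℝ f x v := by
  intro x m
  have translate : (fun y => f (y + fun i => (m i : ℝ))) = f := funext fun y => hf y m
  dsimp only
  rw [← fderiv_comp_add_right, translate]

theorem eq_of_coe_eq {f : (Fin d → ℝ) → E} (hf : IsLatticePeriodic f) {x y : Fin d → ℝ}
    (hxy : (fun i => (x i : UnitAddCircle)) = fun i => (y i : UnitAddCircle)) : f x = f y := by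
  have shift : ∀ i, ∃ n : ℤ, y i = x i + n := fun i => by
    obtain ⟨n, hn⟩ := AddSubgroup.mem_zmultiples_iff.1 (QuotientAddGroup.eq.1 (congrFun hxy i))
    simp only [zsmul_eq_mul, mul_one] at hn
    exact ⟨n, by linarith⟩
  choose m hm using shift
  rw [← hf x m]
  exact congrArg f (funext fun i => (hm i).symm)

theorem exists_continuousMap_lift [TopologicalSpace E] {f : (Fin d → ℝ) → E}
    (hf : IsLatticePeriodic f) (hc : Continuous f) :
    ∃ F : C(UnitAddTorus (Fin d), E), ∀ x : Fin d → ℝ,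
      F (fun i => (x i : UnitAddCircle)) = f x := by
  have hq : IsOpenQuotientMap (Pi.map fun (_ : Fin d) (t : ℝ) => (t : UnitAddCircle)) :=
    IsOpenQuotientMap.piMap fun _ => QuotientAddGroup.isOpenQuotientMap_mk
  have lift_eq : ∀ x : Fin d → ℝ,
      f (Function.surjInv hq.surjective fun i => (x i : UnitAddCircle)) = f x :=
    fun _ => hf.eq_of_coe_eq (Function.surjInv_eq hq.surjective _)
  refine ⟨⟨fun z => f (Function.surjInv hq.surjective z), ?_⟩, lift_eq⟩
  rw [hq.isQuotientMap.continuous_iff]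
  exact hc.congr fun x => (lift_eq x).symm

theorem integral_fderiv_single_eq_zero [NormedAddCommGroup E] [NormedSpace ℝ E]
    {f : (Fin d → ℝ) → E} (hf : IsLatticePeriodic f) (hc : ContDiff ℝ 1 f) (i : Fin d) :
    ∫ x in Icc (0 : Fin d → ℝ) 1, fderiv ℝ f x (Pi.single i 1) = 0 := by
  by_cases hE : CompleteSpace E
  swap
  · exact integral_of_not_completeSpace hE
  obtain _ | n := d
  · exact i.elim0
  have divergence_eq : ∀ x, ∑ j, (if j = i then fderiv ℝ f x else 0) (Pi.single j 1)
      = fderiv ℝ f x (Pi.single i 1) := fun x => by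
    rw [Finset.sum_eq_single i (fun j _ hj => by simp [hj]) (by simp), if_pos rfl]
  have faces := integral_divergence_of_hasFDerivAt_off_countable' (0 : Fin (n + 1) → ℝ) 1
    zero_le_one (fun j x => if j = i then f x else 0) (fun j x => if j = i then fderiv ℝ f x else 0)
    ∅ countable_empty
    (fun j => by
      split_ifs
      exacts [hc.continuous.continuousOn, continuousOn_const])
    (fun x _ j => by
      split_ifs
      exacts [(hc.differentiable one_ne_zero x).hasFDerivAt, hasFDerivAt_const _ _])
    (by
      simp only [divergence_eq]
      exact ((hc.continuous_fderiv one_ne_zero).clm_apply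
        continuous_const).continuousOn.integrableOn_compact isCompact_Icc)
  simp only [divergence_eq] at faces
  rw [faces]
  refine Finset.sum_eq_zero fun j _ => sub_eq_zero.2 ?_
  congr 1
  ext x
  rcases eq_or_ne j i with rfl | hj
  · simp only [if_true]
    refine Eq.trans ?_ (hf _ (Pi.single j 1))
    congr 1
    ext l
    refine Fin.succAboveCases j ?_ (fun l => ?_) l <;> simp
  · simp [hj]

end IsLatticePeriodic

theorem setOf_forall_mem_Ioc_ae_eq_Icc :
    {x : Fin d → ℝ | ∀ i, x i ∈ Ioc ((0 : Fin d → ℝ) i) ((0 : Fin d → ℝ) i + 1)}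
      =ᵐ[volume] Icc (0 : Fin d → ℝ) 1 := by
  have univ_pi_eq : {x : Fin d → ℝ | ∀ i, x i ∈ Ioc ((0 : Fin d → ℝ) i) ((0 : Fin d → ℝ) i + 1)}
      = univ.pi fun i => Ioc ((0 : Fin d → ℝ) i) ((1 : Fin d → ℝ) i) := by
    ext x
    simp [Set.mem_pi]
  rw [univ_pi_eq]
  exact Measure.univ_pi_Ioc_ae_eq_Icc (μ := fun _ : Fin d => (volume : Measure ℝ))

theorem integral_unitAddTorus {E : Type*} [NormedAddCommGroup E] [NormedSpace ℝ E]
    (F : UnitAddTorus (Fin d) → E) :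
    ∫ z, F z = ∫ x in Icc (0 : Fin d → ℝ) 1, F (fun i => (x i : UnitAddCircle)) := by
  rw [UnitAddTorus.integral_preimage F 0]
  exact setIntegral_congr_set setOf_forall_mem_Ioc_ae_eq_Icc

theorem mFourier_neg_coe (k : Fin d → ℤ) (x : Fin d → ℝ) :
    UnitAddTorus.mFourier (-k) (fun i => (x i : UnitAddCircle)) = torusCharacter k x := by
  simp only [UnitAddTorus.mFourier, ContinuousMap.coe_mk, torusCharacter, fourier_coe_apply]
  rw [← Complex.exp_sum, Finset.mul_sum]
  congr 1
  refine Finset.sum_congr rfl fun i _ => ?_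
  simp only [Pi.neg_apply, Int.cast_neg, Complex.ofReal_one, div_one]
  ring

theorem mFourierCoeff_toLp_eq {f : (Fin d → ℝ) → ℂ} {F : C(UnitAddTorus (Fin d), ℂ)}
    (hF : ∀ x : Fin d → ℝ, F (fun i => (x i : UnitAddCircle)) = f x) (k : Fin d → ℤ) :
    UnitAddTorus.mFourierCoeff (F.toLp 2 volume ℂ) k = torusFourierCoeff f k := by
  rw [UnitAddTorus.mFourierCoeff_toLp, UnitAddTorus.mFourierCoeff, integral_unitAddTorus,
    torusFourierCoeff]
  simp only [mFourier_neg_coe, hF, smul_eq_mul, mul_comm]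

theorem hasSum_conj_torusFourierCoeff_mul {f g : (Fin d → ℝ) → ℂ} (hf : Continuous f)
    (hg : Continuous g) (pf : IsLatticePeriodic f) (pg : IsLatticePeriodic g) :
    HasSum (fun k => conj (torusFourierCoeff f k) * torusFourierCoeff g k)
      (∫ x in Icc (0 : Fin d → ℝ) 1, conj (f x) * g x) := by
  obtain ⟨F, hF⟩ := pf.exists_continuousMap_lift hf
  obtain ⟨G, hG⟩ := pg.exists_continuousMap_lift hg
  have parseval := UnitAddTorus.hasSum_prod_mFourierCoeff (F.toLp 2 volume ℂ) (G.toLp 2 volume ℂ)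
  have integral_toLp : ∫ t, conj (F.toLp 2 volume ℂ t) * (G.toLp 2 volume ℂ t) =
      ∫ t, conj (F t) * G t := by
    refine integral_congr_ae ?_
    filter_upwards [ContinuousMap.coeFn_toLp (p := 2) (𝕜 := ℂ) volume F,
      ContinuousMap.coeFn_toLp (p := 2) (𝕜 := ℂ) volume G] with t hFt hGt
    rw [hFt, hGt]
  rw [integral_toLp, integral_unitAddTorus] at parseval
  simpa only [mFourierCoeff_toLp_eq hF, mFourierCoeff_toLp_eq hG, hF, hG] using parseval

theorem summable_sq_norm_torusFourierCoeff {f : (Fin d → ℝ) → ℂ} (hf : Continuous f)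
    (pf : IsLatticePeriodic f) : Summable fun k => ‖torusFourierCoeff f k‖ ^ 2 := by
  simpa [← sq] using (hasSum_conj_torusFourierCoeff_mul hf hf pf pf).summable.norm

theorem contDiff_torusCharacter (k : Fin d → ℤ) {n : WithTop ℕ∞} :
    ContDiff ℝ n (torusCharacter k) :=
  (contDiff_const.mul <| ContDiff.sum fun i _ =>
    contDiff_const.mul (Complex.ofRealCLM.contDiff.comp (contDiff_apply ℝ ℝ i))).cexp

theorem isLatticePeriodic_torusCharacter (k : Fin d → ℤ) :
    IsLatticePeriodic (torusCharacter k) := by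
  intro x m
  unfold torusCharacter
  rw [Complex.exp_eq_exp_iff_exists_int]
  refine ⟨-∑ i, k i * m i, ?_⟩
  simp only [Pi.add_apply, Complex.ofReal_add, mul_add, Finset.sum_add_distrib]
  push_cast
  ring

theorem torusCharacter_add (k l : Fin d → ℤ) (x : Fin d → ℝ) :
    torusCharacter (k + l) x = torusCharacter k x * torusCharacter l x := by
  simp only [torusCharacter, ← Complex.exp_add, ← mul_add, ← Finset.sum_add_distrib, Pi.add_apply,
    Int.cast_add, add_mul]

theorem fderiv_torusCharacter_single (k : Fin d → ℤ) (x : Fin d → ℝ) (i : Fin d) :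
    fderiv ℝ (torusCharacter k) x (Pi.single i 1) =
      -(2 * Real.pi * Complex.I * k i) * torusCharacter k x := by
  have phase : HasFDerivAt (fun x : Fin d → ℝ => ∑ i, (k i : ℂ) * (x i : ℂ))
      (∑ i, (k i : ℂ) • Complex.ofRealCLM.comp
        (ContinuousLinearMap.proj (R := ℝ) (φ := fun _ : Fin d => ℝ) i)) x :=
    HasFDerivAt.fun_sum fun i _ => (Complex.ofRealCLM.comp
      (ContinuousLinearMap.proj (R := ℝ) (φ := fun _ : Fin d => ℝ) i)).hasFDerivAt.const_mul _
  have character : HasFDerivAt (torusCharacter k) _ x :=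
    (phase.const_mul (-(2 * Real.pi * Complex.I))).cexp
  rw [character.fderiv]
  simp only [smul_apply, sum_apply, ContinuousLinearMap.comp_apply, smul_eq_mul,
    ContinuousLinearMap.proj_apply, Pi.single_apply, Complex.ofRealCLM_apply,
    apply_ite Complex.ofReal, Complex.ofReal_one, Complex.ofReal_zero, mul_ite, mul_one, mul_zero,
    Finset.sum_ite_eq', Finset.mem_univ, if_true, torusCharacter]
  ring

theorem torusFourierCoeff_fderiv {f : (Fin d → ℝ) → ℂ} (hf : ContDiff ℝ 1 f)
    (pf : IsLatticePeriodic f) (i : Fin d) (k : Fin d → ℤ) :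
    torusFourierCoeff (fun x => fderiv ℝ f x (Pi.single i 1)) k =
      2 * Real.pi * Complex.I * k i * torusFourierCoeff f k := by
  have continuous_fderiv : Continuous fun x => fderiv ℝ f x (Pi.single i 1) :=
    (hf.continuous_fderiv one_ne_zero).clm_apply continuous_const
  have hχ : ContDiff ℝ 1 (torusCharacter k) := contDiff_torusCharacter k
  have product_rule : ∀ x, fderiv ℝ (fun x => f x * torusCharacter k x) x (Pi.single i 1)
      = fderiv ℝ f x (Pi.single i 1) * torusCharacter k x
        - 2 * Real.pi * Complex.I * k i * (f x * torusCharacter k x) := fun x => by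
    rw [fderiv_fun_mul (hf.differentiable one_ne_zero x) (hχ.differentiable one_ne_zero x)]
    simp only [add_apply, smul_apply, fderiv_torusCharacter_single, smul_eq_mul]
    ring
  have by_parts := (pf.mul (isLatticePeriodic_torusCharacter k)).integral_fderiv_single_eq_zero
    (hf.mul hχ) i
  simp only [product_rule] at by_parts
  rwa [integral_sub, integral_const_mul, sub_eq_zero] at by_parts
  · exact (continuous_fderiv.mul hχ.continuous).continuousOn.integrableOn_compact isCompact_Icc
  · exact (continuous_const.mul
      (hf.continuous.mul hχ.continuous)).continuousOn.integrableOn_compact isCompact_Icc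

theorem laplaceSymbol_mul_sq_norm_torusFourierCoeff {f : (Fin d → ℝ) → ℂ} (hf : ContDiff ℝ 1 f)
    (pf : IsLatticePeriodic f) (k : Fin d → ℤ) :
    laplaceSymbol k * ‖torusFourierCoeff f k‖ ^ 2 =
      ∑ i, ‖torusFourierCoeff (fun x => fderiv ℝ f x (Pi.single i 1)) k‖ ^ 2 := by
  simp only [torusFourierCoeff_fderiv hf pf, norm_mul, Complex.norm_real, Complex.norm_I,
    Complex.norm_intCast, Complex.norm_ofNat, Real.norm_eq_abs, mul_pow, sq_abs, laplaceSymbol,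
    ← Finset.sum_mul, ← Finset.mul_sum]
  ring

theorem summable_laplaceSymbol_pow_mul (n : ℕ) : ∀ {f : (Fin d → ℝ) → ℂ},
    ContDiff ℝ (⊤ : ℕ∞) f → IsLatticePeriodic f →
      Summable fun k => laplaceSymbol k ^ n * ‖torusFourierCoeff f k‖ ^ 2 := by
  induction n with
  | zero =>
    intro f hf pf
    simpa using summable_sq_norm_torusFourierCoeff hf.continuous pf
  | succ n ih =>
    intro f hf pf
    have derivatives : Summable fun k => ∑ i, laplaceSymbol k ^ n *
        ‖torusFourierCoeff (fun x => fderiv ℝ f x (Pi.single i 1)) k‖ ^ 2 :=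
      summable_sum fun i _ => ih ((hf.fderiv_right (m := (⊤ : ℕ∞)) le_rfl).clm_apply contDiff_const)
        (pf.fderiv_apply _)
    refine derivatives.congr fun k => ?_
    rw [← Finset.mul_sum, pow_succ, mul_assoc,
      laplaceSymbol_mul_sq_norm_torusFourierCoeff (hf.of_le (by simp)) pf]

theorem enorm_torusFourierCoeff_conj_mul_le {f g : (Fin d → ℝ) → ℂ} (hf : Continuous f)
    (hg : Continuous g) (pf : IsLatticePeriodic f) (pg : IsLatticePeriodic g) (k : Fin d → ℤ) :
    ‖torusFourierCoeff (fun x => conj (f x) * g x) k‖ₑ ≤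
      ∑' l, ‖torusFourierCoeff f l‖ₑ * ‖torusFourierCoeff g (k + l)‖ₑ := by
  have coeff_shift : ∀ l, torusFourierCoeff (fun x => g x * torusCharacter k x) l =
      torusFourierCoeff g (k + l) := fun l => by
    simp only [torusFourierCoeff, torusCharacter_add, mul_assoc]
  have parseval := hasSum_conj_torusFourierCoeff_mul (g := fun x => g x * torusCharacter k x) hf
    (hg.mul (contDiff_torusCharacter k (n := 0)).continuous) pf
    (pg.mul (isLatticePeriodic_torusCharacter k))
  simp only [coeff_shift, ← mul_assoc] at parseval
  rw [torusFourierCoeff, ← parseval.tsum_eq]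
  refine enorm_tsum_le_tsum_enorm.trans_eq (tsum_congr fun l => ?_)
  rw [enorm_mul, RCLike.enorm_conj]

theorem enorm_integral_conj_mul_conj_mul_le {F f g : (Fin d → ℝ) → ℂ} (hF : Continuous F)
    (hf : Continuous f) (hg : Continuous g) (pF : IsLatticePeriodic F)
    (pf : IsLatticePeriodic f) (pg : IsLatticePeriodic g) :
    ‖∫ x in Icc (0 : Fin d → ℝ) 1, conj (F x) * (conj (f x) * g x)‖ₑ ≤
      ∑' p : (Fin d → ℤ) × (Fin d → ℤ), ‖torusFourierCoeff F p.1‖ₑ * ‖torusFourierCoeff f p.2‖ₑ *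
        ‖torusFourierCoeff g (p.1 + p.2)‖ₑ := by
  have parseval := hasSum_conj_torusFourierCoeff_mul (g := fun x => conj (f x) * g x) hF
    ((Complex.continuous_conj.comp hf).mul hg) pF ((pf.comp conj).mul pg)
  rw [← parseval.tsum_eq, ENNReal.tsum_prod']
  refine enorm_tsum_le_tsum_enorm.trans (ENNReal.tsum_le_tsum fun k => ?_)
  simp only [mul_assoc, ENNReal.tsum_mul_left]
  rw [enorm_mul, RCLike.enorm_conj]
  gcongr
  exact enorm_torusFourierCoeff_conj_mul_le hf hg pf pg k

end Fourier

section Symbol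

variable {d : ℕ}

theorem laplaceSymbol_nonneg (k : Fin d → ℤ) : 0 ≤ laplaceSymbol k := by
  unfold laplaceSymbol
  positivity

theorem norm_sq_le_laplaceSymbol (k : Fin d → ℤ) : ‖k‖ ^ 2 ≤ laplaceSymbol k := by
  have one_le_two_pi : (1 : ℝ) ≤ (2 * Real.pi) ^ 2 := by nlinarith [Real.pi_gt_three]
  refine (Real.le_sqrt (norm_nonneg k) (laplaceSymbol_nonneg k)).1 <|
    (pi_norm_le_iff_of_nonneg (Real.sqrt_nonneg _)).2 fun i => Real.le_sqrt_of_sq_le ?_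
  calc ‖k i‖ ^ 2 = (k i : ℝ) ^ 2 := by rw [Int.norm_eq_abs, sq_abs]
    _ ≤ ∑ j, (k j : ℝ) ^ 2 :=
        Finset.single_le_sum (f := fun j => (k j : ℝ) ^ 2) (fun j _ => sq_nonneg _)
          (Finset.mem_univ i)
    _ ≤ laplaceSymbol k := le_mul_of_one_le_left (by positivity) one_le_two_pi

theorem one_le_laplaceSymbol {k : Fin d → ℤ} (hk : k ≠ 0) : 1 ≤ laplaceSymbol k :=
  (one_le_pow₀ (one_le_norm_of_ne_zero hk)).trans (norm_sq_le_laplaceSymbol k)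

theorem norm_rpow_sq_le_laplaceSymbol_rpow {s : ℝ} (hs : 0 ≤ s) (k : Fin d → ℤ) :
    (‖k‖ ^ s) ^ 2 ≤ laplaceSymbol k ^ s := by
  rw [← Real.rpow_mul_natCast (norm_nonneg k), mul_comm, Real.rpow_natCast_mul (norm_nonneg k)]
  exact Real.rpow_le_rpow (by positivity) (norm_sq_le_laplaceSymbol k) hs

end Symbol

section Sobolev

open scoped NNReal

variable {u v w : (Fin 3 → ℝ) → (Fin 3 → ℝ)} {s t : ℝ}

theorem specWeight_eq_laplaceSymbol_rpow (s : ℝ) (k : Fin 3 → ℤ) :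
    specWeight s k = laplaceSymbol k ^ s := rfl

theorem specWeight_nonneg (s : ℝ) (k : Fin 3 → ℤ) : 0 ≤ specWeight s k :=
  Real.rpow_nonneg (laplaceSymbol_nonneg k) s

theorem fourierCoeffVF_apply (u : (Fin 3 → ℝ) → (Fin 3 → ℝ)) (k : Fin 3 → ℤ) (j : Fin 3) :
    fourierCoeffVF u k j = torusFourierCoeff (fun x => (u x j : ℂ)) k := rfl

theorem fcNormSq_eq_sum_sq_norm (u : (Fin 3 → ℝ) → (Fin 3 → ℝ)) (k : Fin 3 → ℤ) :
    fcNormSq u k = ∑ j, ‖fourierCoeffVF u k j‖ ^ 2 := by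
  simp only [fcNormSq, Complex.normSq_eq_norm_sq]

theorem fcNormSq_nonneg (u : (Fin 3 → ℝ) → (Fin 3 → ℝ)) (k : Fin 3 → ℤ) : 0 ≤ fcNormSq u k :=
  Finset.sum_nonneg fun _ _ => Complex.normSq_nonneg _

theorem sq_norm_fourierCoeffVF_le_fcNormSq (u : (Fin 3 → ℝ) → (Fin 3 → ℝ)) (k : Fin 3 → ℤ)
    (j : Fin 3) : ‖fourierCoeffVF u k j‖ ^ 2 ≤ fcNormSq u k := by
  rw [fcNormSq_eq_sum_sq_norm]
  exact Finset.single_le_sum (f := fun i => ‖fourierCoeffVF u k i‖ ^ 2)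
    (fun _ _ => by positivity) (Finset.mem_univ j)

theorem isLatticePeriodic_ofReal_component (pu : IsPeriodicVF u) (j : Fin 3) :
    IsLatticePeriodic fun x => (u x j : ℂ) :=
  IsLatticePeriodic.comp pu fun y : Fin 3 → ℝ => (y j : ℂ)

theorem contDiff_ofReal_component {n : WithTop ℕ∞} (hu : ContDiff ℝ n u) (j : Fin 3) :
    ContDiff ℝ n fun x => (u x j : ℂ) :=
  Complex.ofRealCLM.contDiff.comp ((contDiff_apply ℝ ℝ j).comp hu)

theorem fderiv_ofReal_component {x : Fin 3 → ℝ} (hu : DifferentiableAt ℝ u x) (j : Fin 3)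
    (e : Fin 3 → ℝ) : fderiv ℝ (fun x => (u x j : ℂ)) x e = (fderiv ℝ u x e j : ℝ) := by
  have component : HasFDerivAt (fun x => (u x j : ℂ)) _ x :=
    ((Complex.ofRealCLM.comp (ContinuousLinearMap.proj (R := ℝ)
      (φ := fun _ : Fin 3 => ℝ) j)).hasFDerivAt (x := u x)).comp x hu.hasFDerivAt
  rw [component.fderiv]
  rfl

theorem fourierCoeffVF_zero (hu : Continuous u) (hu0 : IsMeanFree u) (j : Fin 3) :
    fourierCoeffVF u 0 j = 0 := by
  have integrable : IntegrableOn u (Set.Icc (0 : Fin 3 → ℝ) 1) :=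
    hu.continuousOn.integrableOn_compact isCompact_Icc
  have component_mean := (Complex.ofRealCLM.comp (ContinuousLinearMap.proj (R := ℝ)
    (φ := fun _ : Fin 3 => ℝ) j)).integral_comp_comm integrable
  rw [IsMeanFree] at hu0
  rw [hu0, map_zero] at component_mean
  simpa [fourierCoeffVF] using component_mean

theorem ite_specWeight_mul_fcNormSq_nonneg (s : ℝ) (u : (Fin 3 → ℝ) → (Fin 3 → ℝ))
    (k : Fin 3 → ℤ) : 0 ≤ if k = 0 then 0 else specWeight s k * fcNormSq u k := by
  split_ifs
  exacts [le_rfl, mul_nonneg (specWeight_nonneg s k) (fcNormSq_nonneg u k)]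

theorem summable_specWeight_mul_fcNormSq (hu : ContDiff ℝ (⊤ : ℕ∞) u) (pu : IsPeriodicVF u)
    (s : ℝ) : Summable fun k => if k = 0 then 0 else specWeight s k * fcNormSq u k := by
  obtain ⟨n, hn⟩ := exists_nat_ge s
  have integer_order : Summable fun k => laplaceSymbol k ^ n * fcNormSq u k := by
    simp only [fcNormSq_eq_sum_sq_norm, Finset.mul_sum]
    exact summable_sum fun j _ => summable_laplaceSymbol_pow_mul n (contDiff_ofReal_component hu j)
      (isLatticePeriodic_ofReal_component pu j)
  refine integer_order.of_nonneg_of_le (ite_specWeight_mul_fcNormSq_nonneg s u) fun k => ?_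
  split_ifs with hk
  · exact mul_nonneg (pow_nonneg (laplaceSymbol_nonneg k) n) (fcNormSq_nonneg u k)
  · rw [specWeight_eq_laplaceSymbol_rpow, ← Real.rpow_natCast]
    exact mul_le_mul_of_nonneg_right
      (Real.rpow_le_rpow_of_exponent_le (one_le_laplaceSymbol hk) hn) (fcNormSq_nonneg u k)

theorem hsNorm_nonneg (s : ℝ) (u : (Fin 3 → ℝ) → (Fin 3 → ℝ)) : 0 ≤ hsNorm s u :=
  Real.sqrt_nonneg _

theorem hsNorm_le_mul_hsNorm (hv : ContDiff ℝ (⊤ : ℕ∞) v) (pv : IsPeriodicVF v) {C : ℝ}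
    (hC : 0 ≤ C) (h : ∀ k ≠ 0, specWeight s k * fcNormSq u k ≤
      C ^ 2 * (specWeight t k * fcNormSq v k)) :
    hsNorm s u ≤ C * hsNorm t v := by
  have dominating := (summable_specWeight_mul_fcNormSq hv pv t).mul_left (C ^ 2)
  have termwise : ∀ k, (if k = 0 then 0 else specWeight s k * fcNormSq u k) ≤
      C ^ 2 * if k = 0 then 0 else specWeight t k * fcNormSq v k := fun k => by
    split_ifs with hk
    exacts [(mul_zero _).ge, h k hk]
  calc hsNorm s u
      ≤ √(∑' k, C ^ 2 * if k = 0 then 0 else specWeight t k * fcNormSq v k) :=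
        Real.sqrt_le_sqrt <|
          (dominating.of_nonneg_of_le
            (ite_specWeight_mul_fcNormSq_nonneg s u) termwise).tsum_le_tsum termwise dominating
    _ = C * hsNorm t v := by
        rw [tsum_mul_left, Real.sqrt_mul (sq_nonneg C), Real.sqrt_sq hC, hsNorm]

theorem hsNorm_mono (hu : ContDiff ℝ (⊤ : ℕ∞) u) (pu : IsPeriodicVF u) (hst : s ≤ t) :
    hsNorm s u ≤ hsNorm t u := by
  rw [← one_mul (hsNorm t u)]
  refine hsNorm_le_mul_hsNorm hu pu zero_le_one fun k hk => ?_
  rw [one_pow, one_mul]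
  exact mul_le_mul_of_nonneg_right
    (Real.rpow_le_rpow_of_exponent_le (one_le_laplaceSymbol hk) hst) (fcNormSq_nonneg u k)

theorem l2ENorm_fourierCoeffVF_le (hu : IsSmoothTorusVF u) (hs : 0 ≤ s) (j : Fin 3) :
    l2ENorm (fun k => ENNReal.ofReal (‖k‖ ^ s) * ‖fourierCoeffVF u k j‖ₑ) ≤
      ENNReal.ofReal (hsNorm s u) := by
  have nonneg := ite_specWeight_mul_fcNormSq_nonneg s u
  rw [l2ENorm_le_iff, ← ENNReal.ofReal_pow (hsNorm_nonneg s u), hsNorm,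
    Real.sq_sqrt (tsum_nonneg nonneg),
    ENNReal.ofReal_tsum_of_nonneg nonneg (summable_specWeight_mul_fcNormSq hu.1 hu.2.1 s)]
  refine ENNReal.tsum_le_tsum fun k => ?_
  split_ifs with hk
  · simp [hk, fourierCoeffVF_zero hu.1.continuous hu.2.2]
  · rw [← ofReal_norm, ← ENNReal.ofReal_mul (by positivity), ← ENNReal.ofReal_pow (by positivity),
      mul_pow]
    exact ENNReal.ofReal_le_ofReal (mul_le_mul (norm_rpow_sq_le_laplaceSymbol_rpow hs k)
      (sq_norm_fourierCoeffVF_le_fcNormSq u k j) (by positivity) (specWeight_nonneg s k))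

theorem fourierCoeffVF_fderiv_apply (hv : Differentiable ℝ v) (e : Fin 3 → ℝ) (k : Fin 3 → ℤ)
    (j : Fin 3) : fourierCoeffVF (fun x => fderiv ℝ v x e) k j =
      torusFourierCoeff (fun x => fderiv ℝ (fun y => (v y j : ℂ)) x e) k := by
  simp only [fourierCoeffVF_apply, fderiv_ofReal_component (hv _)]

theorem laplaceSymbol_mul_fcNormSq (hv : ContDiff ℝ 1 v) (pv : IsPeriodicVF v)
    (k : Fin 3 → ℤ) : laplaceSymbol k * fcNormSq v k =
      ∑ i, fcNormSq (fun x => fderiv ℝ v x (Pi.single i 1)) k := by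
  simp only [fcNormSq_eq_sum_sq_norm,
    fourierCoeffVF_fderiv_apply (hv.differentiable one_ne_zero), fourierCoeffVF_apply,
    Finset.mul_sum]
  rw [Finset.sum_comm]
  exact Finset.sum_congr rfl fun j _ => laplaceSymbol_mul_sq_norm_torusFourierCoeff
    (contDiff_ofReal_component hv j) (isLatticePeriodic_ofReal_component pv j) k

theorem hsNorm_fderiv_single_le (hv : ContDiff ℝ (⊤ : ℕ∞) v) (pv : IsPeriodicVF v) (s : ℝ)
    (i : Fin 3) : hsNorm s (fun x => fderiv ℝ v x (Pi.single i 1)) ≤ hsNorm (s + 1) v := by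
  rw [← one_mul (hsNorm (s + 1) v)]
  refine hsNorm_le_mul_hsNorm hv pv zero_le_one fun k hk => ?_
  rw [one_pow, one_mul, specWeight_eq_laplaceSymbol_rpow, specWeight_eq_laplaceSymbol_rpow,
    Real.rpow_add_one (one_pos.trans_le (one_le_laplaceSymbol hk)).ne', mul_assoc,
    laplaceSymbol_mul_fcNormSq (hv.of_le (by simp)) pv]
  exact mul_le_mul_of_nonneg_left
    (Finset.single_le_sum (f := fun i => fcNormSq (fun x => fderiv ℝ v x (Pi.single i 1)) k)
      (fun _ _ => fcNormSq_nonneg _ _) (Finset.mem_univ i))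
    (Real.rpow_nonneg (laplaceSymbol_nonneg k) s)

theorem isSmoothTorusVF_fderiv_single (hv : ContDiff ℝ (⊤ : ℕ∞) v) (pv : IsPeriodicVF v)
    (i : Fin 3) : IsSmoothTorusVF fun x => fderiv ℝ v x (Pi.single i 1) :=
  ⟨(hv.fderiv_right (m := (⊤ : ℕ∞)) le_rfl).clm_apply contDiff_const,
    IsLatticePeriodic.fderiv_apply pv _,
    IsLatticePeriodic.integral_fderiv_single_eq_zero pv (hv.of_le (by simp)) i⟩

theorem enorm_integral_mul_mul_le (hu : Continuous u) (pu : IsPeriodicVF u) (hv : Continuous v)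
    (pv : IsPeriodicVF v) (hw : Continuous w) (pw : IsPeriodicVF w) (i j l : Fin 3) :
    ‖∫ x in Set.Icc (0 : Fin 3 → ℝ) 1, u x i * v x j * w x l‖ₑ ≤
      ∑' p : (Fin 3 → ℤ) × (Fin 3 → ℤ), ‖fourierCoeffVF u p.1 i‖ₑ * ‖fourierCoeffVF v p.2 j‖ₑ *
        ‖fourierCoeffVF w (p.1 + p.2) l‖ₑ := by
  have continuous_component : ∀ {f : (Fin 3 → ℝ) → (Fin 3 → ℝ)}, Continuous f →
      ∀ n, Continuous fun x => (f x n : ℂ) := fun hf n =>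
    Complex.continuous_ofReal.comp ((continuous_apply n).comp hf)
  refine le_of_eq_of_le ?_ (enorm_integral_conj_mul_conj_mul_le (continuous_component hu i)
    (continuous_component hv j) (continuous_component hw l)
    (isLatticePeriodic_ofReal_component pu i) (isLatticePeriodic_ofReal_component pv j)
    (isLatticePeriodic_ofReal_component pw l))
  simp only [Complex.conj_ofReal, ← Complex.ofReal_mul, mul_assoc, integral_complex_ofReal,
    ← ofReal_norm, Complex.norm_real]

theorem exists_abs_integral_mul_mul_le {a b c : ℝ} (ha0 : 0 ≤ a) (hb0 : 0 ≤ b) (hc0 : 0 ≤ c)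
    (ha : a < 3 / 2) (hb : b < 3 / 2) (hc : c < 3 / 2) (habc : 3 / 2 ≤ a + b + c) :
    ∃ C : ℝ≥0, ∀ u v w : (Fin 3 → ℝ) → (Fin 3 → ℝ),
      IsSmoothTorusVF u → IsSmoothTorusVF v → IsSmoothTorusVF w → ∀ i j l : Fin 3,
        |∫ x in Set.Icc (0 : Fin 3 → ℝ) 1, u x i * v x j * w x l| ≤
          C * (hsNorm a u * hsNorm b v * hsNorm c w) := by
  obtain ⟨C, hC⟩ := exists_tsum_mul_mul_add_le_l2ENorm (ι := Fin 3) ha0 hb0 (by simpa) (by simpa)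
    (by simpa) (by simpa)
  refine ⟨C, fun u v w hu hv hw i j l => ?_⟩
  have coeff_zero : ∀ {f}, IsSmoothTorusVF f → ∀ n, ‖fourierCoeffVF f 0 n‖ₑ = 0 := fun hf n => by
    rw [fourierCoeffVF_zero hf.1.continuous hf.2.2, enorm_zero]
  have hu0 := hsNorm_nonneg a u
  have hv0 := hsNorm_nonneg b v
  have hw0 := hsNorm_nonneg c w
  refine (ENNReal.ofReal_le_ofReal_iff (by positivity)).1 ?_
  rw [← Real.norm_eq_abs, ofReal_norm]
  calc ‖∫ x in Set.Icc (0 : Fin 3 → ℝ) 1, u x i * v x j * w x l‖ₑ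
      ≤ ∑' p : (Fin 3 → ℤ) × (Fin 3 → ℤ), ‖fourierCoeffVF u p.1 i‖ₑ * ‖fourierCoeffVF v p.2 j‖ₑ *
          ‖fourierCoeffVF w (p.1 + p.2) l‖ₑ :=
        enorm_integral_mul_mul_le hu.1.continuous hu.2.1 hv.1.continuous hv.2.1
          hw.1.continuous hw.2.1 i j l
    _ ≤ C * (l2ENorm (fun k => ENNReal.ofReal (‖k‖ ^ a) * ‖fourierCoeffVF u k i‖ₑ) *
          l2ENorm (fun k => ENNReal.ofReal (‖k‖ ^ b) * ‖fourierCoeffVF v k j‖ₑ) *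
          l2ENorm (fun k => ENNReal.ofReal (‖k‖ ^ c) * ‖fourierCoeffVF w k l‖ₑ)) :=
        hC (fun k => ‖fourierCoeffVF u k i‖ₑ) (fun k => ‖fourierCoeffVF v k j‖ₑ)
          (fun k => ‖fourierCoeffVF w k l‖ₑ) (coeff_zero hu i) (coeff_zero hv j) (coeff_zero hw l)
    _ ≤ C * (ENNReal.ofReal (hsNorm a u) * ENNReal.ofReal (hsNorm b v) *
          ENNReal.ofReal (hsNorm c w)) := by
        gcongr
        exacts [l2ENorm_fourierCoeffVF_le hu ha0 i, l2ENorm_fourierCoeffVF_le hv hb0 j,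
          l2ENorm_fourierCoeffVF_le hw hc0 l]
    _ = ENNReal.ofReal (C * (hsNorm a u * hsNorm b v * hsNorm c w)) := by
        rw [ENNReal.ofReal_mul C.coe_nonneg, ENNReal.ofReal_mul (by positivity),
          ENNReal.ofReal_mul hu0, ENNReal.ofReal_coe_nnreal]

theorem exists_abs_bform_le {a b c : ℝ} (ha0 : 0 ≤ a) (hb0 : 0 ≤ b) (hc0 : 0 ≤ c)
    (ha : a < 3 / 2) (hb : b < 3 / 2) (hc : c < 3 / 2) (habc : 3 / 2 ≤ a + b + c) :
    ∃ C : ℝ, 0 < C ∧ ∀ u v w : (Fin 3 → ℝ) → (Fin 3 → ℝ),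
      IsSmoothTorusVF u → ContDiff ℝ (⊤ : ℕ∞) v → IsPeriodicVF v → IsSmoothTorusVF w →
        |bform u v w| ≤ C * (hsNorm a u * hsNorm (b + 1) v * hsNorm c w) := by
  obtain ⟨C, hC⟩ := exists_abs_integral_mul_mul_le ha0 hb0 hc0 ha hb hc habc
  refine ⟨9 * (C + 1), by positivity, fun u v w hu hv pv hw => ?_⟩
  have hu0 := hsNorm_nonneg a u
  have hv0 := hsNorm_nonneg (b + 1) v
  have hw0 := hsNorm_nonneg c w
  set M := hsNorm a u * hsNorm (b + 1) v * hsNorm c w with hM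
  have component : ∀ i j : Fin 3, |∫ x in Set.Icc (0 : Fin 3 → ℝ) 1,
      u x i * fderiv ℝ v x (Pi.single i 1) j * w x j| ≤ C * M := fun i j => by
    refine (hC u _ w hu (isSmoothTorusVF_fderiv_single hv pv i) hw i j j).trans ?_
    rw [hM]
    gcongr
    exact hsNorm_fderiv_single_le hv pv b i
  calc |bform u v w| ≤ ∑ _i : Fin 3, ∑ _j : Fin 3, C * M :=
        (Finset.abs_sum_le_sum_abs _ _).trans <| Finset.sum_le_sum fun i _ =>
          (Finset.abs_sum_le_sum_abs _ _).trans <| Finset.sum_le_sum fun j _ => component i j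
    _ = 9 * (C * M) := by
        simp only [Finset.sum_const, Finset.card_univ, Fintype.card_fin, nsmul_eq_mul]
        ring
    _ ≤ 9 * (C + 1) * M := by
        have hM0 : 0 ≤ M := by positivity
        linarith

end Sobolev

section InverseHelmholtz

variable {v w : (Fin 3 → ℝ) → (Fin 3 → ℝ)} {α r : ℝ}

/-- The relation `w = (I + α^{2r} A^r)⁻¹ v`, expressed on the Fourier side. -/
def IsInverseHelmholtz (α r : ℝ) (v w : (Fin 3 → ℝ) → (Fin 3 → ℝ)) : Prop :=
  ∀ (k : Fin 3 → ℤ) (j : Fin 3), fourierCoeffVF w k j =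
    (((1 + α ^ (2 * r) * specWeight r k : ℝ) : ℂ))⁻¹ * fourierCoeffVF v k j

theorem IsInverseHelmholtz.fcNormSq_eq (h : IsInverseHelmholtz α r v w) (k : Fin 3 → ℤ) :
    fcNormSq w k = (1 + α ^ (2 * r) * specWeight r k)⁻¹ ^ 2 * fcNormSq v k := by
  simp only [fcNormSq, h k, map_mul, map_inv₀, Complex.normSq_ofReal, Finset.mul_sum, sq,
    mul_inv]

theorem inv_one_add_mul_specWeight_le (hα : 0 < α) {k : Fin 3 → ℤ} (hk : k ≠ 0) :
    (1 + α ^ (2 * r) * specWeight r k)⁻¹ ≤ α ^ (-(2 * r)) * laplaceSymbol k ^ (-r) := by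
  have hW : 0 < laplaceSymbol k := one_pos.trans_le (one_le_laplaceSymbol hk)
  rw [Real.rpow_neg hα.le, Real.rpow_neg hW.le, ← mul_inv, specWeight_eq_laplaceSymbol_rpow]
  gcongr
  linarith

theorem IsInverseHelmholtz.hsNorm_add_le (h : IsInverseHelmholtz α r v w) (hα : 0 < α)
    (hv : ContDiff ℝ (⊤ : ℕ∞) v) (pv : IsPeriodicVF v) (s : ℝ) {τ : ℝ} (hτ : τ ≤ 2 * r) :
    hsNorm (s + τ) w ≤ α ^ (-(2 * r)) * hsNorm s v := by
  refine hsNorm_le_mul_hsNorm hv pv (by positivity) fun k hk => ?_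
  have hW : 1 ≤ laplaceSymbol k := one_le_laplaceSymbol hk
  have hW0 : 0 < laplaceSymbol k := one_pos.trans_le hW
  have fv := fcNormSq_nonneg v k
  rw [h.fcNormSq_eq, specWeight_eq_laplaceSymbol_rpow (s + τ)]
  calc laplaceSymbol k ^ (s + τ) *
        ((1 + α ^ (2 * r) * specWeight r k)⁻¹ ^ 2 * fcNormSq v k)
      ≤ laplaceSymbol k ^ (s + 2 * r) *
          ((α ^ (-(2 * r)) * laplaceSymbol k ^ (-r)) ^ 2 * fcNormSq v k) := by
        have := specWeight_nonneg r k
        gcongr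
        exact inv_one_add_mul_specWeight_le hα hk
    _ = (α ^ (-(2 * r))) ^ 2 * (laplaceSymbol k ^ (s + 2 * r) * laplaceSymbol k ^ (-r * 2)
          * fcNormSq v k) := by
        rw [mul_pow, ← Real.rpow_mul_natCast hW0.le, Nat.cast_ofNat]
        ring
    _ = (α ^ (-(2 * r))) ^ 2 * (specWeight s k * fcNormSq v k) := by
        rw [← Real.rpow_add hW0, specWeight_eq_laplaceSymbol_rpow]
        ring_nf

theorem bform_inverse_helmholtz_estimate_general :
    ∃ C : ℝ, 0 < C ∧ ∀ r α : ℝ, 3 / 8 ≤ r → 0 < α →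
      ∀ u v w z : (Fin 3 → ℝ) → (Fin 3 → ℝ), IsSmoothTorusVF u → IsSmoothTorusVF z →
        ContDiff ℝ (⊤ : ℕ∞) v → IsPeriodicVF v → ContDiff ℝ (⊤ : ℕ∞) w → IsPeriodicVF w →
        IsInverseHelmholtz α r v w →
        |bform u w z| ≤ C * α ^ (-(2 * r)) * (hsNorm r u * hsNorm r z) * hsNorm 1 v := by
  obtain ⟨C, hC, trilinear⟩ := exists_abs_bform_le (a := 3 / 8) (b := 3 / 4) (c := 3 / 8)
    (by norm_num) (by norm_num) (by norm_num) (by norm_num) (by norm_num) (by norm_num)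
    (by norm_num)
  refine ⟨C, hC, fun r α hr hα u v w z hu hz hv pv hw pw hvw => ?_⟩
  have smoothing : hsNorm (3 / 4 + 1) w ≤ α ^ (-(2 * r)) * hsNorm 1 v := by
    rw [add_comm]
    exact hvw.hsNorm_add_le hα hv pv 1 (by linarith)
  calc |bform u w z| ≤ C * (hsNorm (3 / 8) u * hsNorm (3 / 4 + 1) w * hsNorm (3 / 8) z) :=
        trilinear u w z hu hw pw hz
    _ ≤ C * (hsNorm r u * (α ^ (-(2 * r)) * hsNorm 1 v) * hsNorm r z) := by
        have hu0 := hsNorm_nonneg r u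
        have hw0 := hsNorm_nonneg (3 / 4 + 1) w
        have hz0 := hsNorm_nonneg (3 / 8) z
        have hv0 := hsNorm_nonneg 1 v
        gcongr
        exacts [hsNorm_mono hu.1 hu.2.1 hr, hsNorm_mono hz.1 hz.2.1 hr]
    _ = C * α ^ (-(2 * r)) * (hsNorm r u * hsNorm r z) * hsNorm 1 v := by ring

end InverseHelmholtz

theorem bform_inverse_helmholtz_estimate :
    ∀ r : ℝ, 3/8 ≤ r → r ≤ 3/2 →
    ∀ α : ℝ, 0 < α →
    ∃ C : ℝ, 0 < C ∧
      ∀ u v w : (Fin 3 → ℝ) → (Fin 3 → ℝ),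
        IsSmoothTorusVF u → IsDivFree u →
        IsSmoothTorusVF v →
        IsSmoothTorusVF w →
        -- `w = (I + α^{2r} A^r)⁻¹ v`, i.e. `ŵ(k) = (1 + α^{2r}|2πk|^{2r})⁻¹ v̂(k)` for all `k`
        (∀ k : Fin 3 → ℤ, ∀ j : Fin 3,
          fourierCoeffVF w k j
            = (((1 + α ^ (2*r) * specWeight r k : ℝ) : ℂ))⁻¹ * fourierCoeffVF v k j) →
        |bform u w u| ≤ C * (hsNorm r u) ^ 2 * hsNorm 1 v := by
  intro r hr _ α hα
  obtain ⟨C, hC, estimate⟩ := bform_inverse_helmholtz_estimate_general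
  refine ⟨C * α ^ (-(2 * r)), by positivity, fun u v w hu _ hv hw hvw => ?_⟩
  rw [sq]
  exact estimate r α hr hα u v w u hu hu hv.1 hv.2.1 hw.1 hw.2.1 hvw
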